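/- arXiv:1207.5747 — 4 statements merged into one kernel-verified Lean document; each statement's English description precedes it below -/
import Mathlib

section
/- If N ≤ σ0 then m = N is a pure Nash equilibrium of the parking spot selection game; moreover, if N < σ0 then m = N is the unique pure Nash equilibrium in {0, 1, …, N}. -/
/-!
For `1 ≤ γ` and `k ≥ 1` the expected cost of competing is `max 1 (γ - R / k * (γ - 1))`, which is
nondecreasing in `k` and crosses the private price `β` exactly at `k = σ0`. When the `N`-th
competitor does not regret competing, "everyone competes" is an equilibrium. When the cost is
strictly below `β` at `N`, it is so at every smaller load, so any driver paying privately would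
rather compete; at equality the profile with `N - 1` competitors is a second equilibrium.
-/

section EntryGame

variable {α : Type*} {c : ℕ → α} {β : α} {N m : ℕ}

/-- Pure Nash equilibrium of the symmetric game in which each of `N` players either enters, at cost
`c k` when `k` players enter, or pays the fixed price `β`. A profile is recorded only by its number
`m` of entrants, since the costs depend on nothing else. -/
def IsEntryEquilibrium [LE α] (c : ℕ → α) (β : α) (N m : ℕ) : Prop :=
  m ≤ N ∧ (1 ≤ m → c m ≤ β) ∧ (m < N → β ≤ c (m + 1))

theorem isEntryEquilibrium_self_iff [LE α] (hN : 1 ≤ N) :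
    IsEntryEquilibrium c β N N ↔ c N ≤ β := by
  simp [IsEntryEquilibrium, hN]

theorem IsEntryEquilibrium.eq_of_lt [Preorder α] (hc : MonotoneOn c (Set.Ici 1)) (hlt : c N < β)
    (h : IsEntryEquilibrium c β N m) : m = N := by
  obtain ⟨hmN, -, hstay⟩ := h
  by_contra hne
  have hm : m + 1 ≤ N := lt_of_le_of_ne hmN hne
  have hload : c (m + 1) ≤ c N := hc (Nat.le_add_left 1 m) ((Nat.le_add_left 1 m).trans hm) hm
  exact ((hstay hm).trans hload).not_gt hlt

theorem isEntryEquilibrium_of_succ_eq [Preorder α] (hc : MonotoneOn c (Set.Ici 1))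
    (heq : c (m + 1) = β) : IsEntryEquilibrium c β (m + 1) m :=
  ⟨m.le_succ, fun hm => heq ▸ hc hm (Nat.le_add_left 1 m) m.le_succ, fun _ => heq.ge⟩

theorem forall_isEntryEquilibrium_iff_eq_iff [PartialOrder α] (hc : MonotoneOn c (Set.Ici 1))
    (hN : 1 ≤ N) : (∀ m, IsEntryEquilibrium c β N m ↔ m = N) ↔ c N < β := by
  constructor
  · intro hunique
    have hle : c N ≤ β := (isEntryEquilibrium_self_iff hN).1 ((hunique N).2 rfl)
    refine hle.lt_of_ne fun heq => ?_
    obtain ⟨n, rfl⟩ := Nat.exists_eq_add_of_le' hN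
    exact n.succ_ne_self ((hunique n).1 (isEntryEquilibrium_of_succ_eq hc heq)).symm
  · intro hlt m
    refine ⟨fun h => h.eq_of_lt hc hlt, ?_⟩
    rintro rfl
    exact (isEntryEquilibrium_self_iff hN).2 hlt.le

end EntryGame

section CompetingCost

variable {K : Type*} [Field K] [LinearOrder K] [IsStrictOrderedRing K] {R β γ : K} {k : ℕ}

/-- Expected cost for each of `k` drivers competing for capacity `R`: with probability
`min 1 (R / k)` a driver parks at the normalized fee `1`, and otherwise pays `γ`. The capacity lies
in `K` and need not be an integer. Since `R / 0 = 0`, the value at `k = 0` is the meaningless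
`γ`. -/
def competingCost (R γ : K) (k : ℕ) : K :=
  min 1 (R / k) + (1 - min 1 (R / k)) * γ

theorem competingCost_eq_max (hγ : 1 ≤ γ) :
    competingCost R γ k = max 1 (γ - R / k * (γ - 1)) := by
  have hγ' : 0 ≤ γ - 1 := sub_nonneg.2 hγ
  calc competingCost R γ k = γ - min 1 (R / k) * (γ - 1) := by rw [competingCost]; ring
    _ = γ - min (γ - 1) (R / k * (γ - 1)) := by rw [min_mul_of_nonneg _ _ hγ', one_mul]
    _ = max 1 (γ - R / k * (γ - 1)) := by rw [← max_sub_sub_left, sub_sub_cancel]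

theorem monotoneOn_competingCost (hR : 0 ≤ R) (hγ : 1 ≤ γ) :
    MonotoneOn (competingCost R γ) (Set.Ici 1) := by
  intro k (hk : 1 ≤ k) l _ hkl
  have : (0 : K) < k := Nat.cast_pos.2 hk
  have : 0 ≤ γ - 1 := sub_nonneg.2 hγ
  rw [competingCost_eq_max hγ, competingCost_eq_max hγ]
  gcongr

theorem competingCost_le_iff (hβ : 1 ≤ β) (hβγ : β < γ) (hk : 1 ≤ k) :
    competingCost R γ k ≤ β ↔ (k : K) ≤ R * (γ - 1) / (γ - β) := by
  have hk₀ : (0 : K) < k := Nat.cast_pos.2 hk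
  rw [competingCost_eq_max (hβ.trans hβγ.le), max_le_iff, and_iff_right hβ, sub_le_comm,
    div_mul_eq_mul_div, le_div_iff₀ hk₀, le_div_iff₀ (sub_pos.2 hβγ), mul_comm]

theorem competingCost_lt_iff (hβ : 1 < β) (hβγ : β < γ) (hk : 1 ≤ k) :
    competingCost R γ k < β ↔ (k : K) < R * (γ - 1) / (γ - β) := by
  have hk₀ : (0 : K) < k := Nat.cast_pos.2 hk
  rw [competingCost_eq_max (hβ.trans hβγ).le, max_lt_iff, and_iff_right hβ, sub_lt_comm,
    div_mul_eq_mul_div, lt_div_iff₀ hk₀, lt_div_iff₀ (sub_pos.2 hβγ), mul_comm]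

end CompetingCost

theorem stmt_1_general {K : Type*} [Field K] [LinearOrder K] [IsStrictOrderedRing K]
    {R β γ : K} {N : ℕ} (hN : 1 ≤ N) (hR : 0 ≤ R) (hβ : 1 < β) (hβγ : β < γ) :
    (IsEntryEquilibrium (competingCost R γ) β N N ↔ (N : K) ≤ R * (γ - 1) / (γ - β)) ∧
    ((∀ m, IsEntryEquilibrium (competingCost R γ) β N m ↔ m = N) ↔
      (N : K) < R * (γ - 1) / (γ - β)) := by
  have hmono := monotoneOn_competingCost hR (hβ.trans hβγ).le
  rw [isEntryEquilibrium_self_iff hN, forall_isEntryEquilibrium_iff_eq_iff hmono hN]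
  exact ⟨competingCost_le_iff hβ.le hβγ hN, competingCost_lt_iff hβ hβγ hN⟩

/-- If N ≤ σ0 then m = N is a pure Nash equilibrium; moreover, if N < σ0
then m = N is the unique pure Nash equilibrium in {0, 1, …, N}. -/
theorem stmt_1 (N R : ℕ) (hN : 1 < N) (hR : 1 ≤ R)
    (β γ δ σ0 : ℝ) (hβ : 1 < β) (hβγ : β < γ)
    (hδ : δ = γ - β) (hσ0 : σ0 = R * (γ - 1) / δ)
    (W : ℕ → ℝ)
    (hW : ∀ k : ℕ, W k = min 1 ((R : ℝ) / (k : ℝ)) + (1 - min 1 ((R : ℝ) / (k : ℝ))) * γ)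
    (isNE : ℕ → Prop)
    (hNE : ∀ m : ℕ, isNE m ↔ m ≤ N ∧ (1 ≤ m → W m ≤ β) ∧ (m < N → β ≤ W (m + 1))) :
    ((N : ℝ) ≤ σ0 → isNE N) ∧
    ((N : ℝ) < σ0 → ∀ m : ℕ, m ≤ N → (isNE m ↔ m = N)) := by
  obtain rfl : W = competingCost (R : ℝ) γ := funext hW
  obtain rfl : isNE = IsEntryEquilibrium _ β N := funext fun m => propext (hNE m)
  subst hσ0 hδ
  have ⟨hself, hunique⟩ := stmt_1_general hN.le R.cast_nonneg hβ hβγ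
  exact ⟨hself.2, fun h m _ => hunique.2 h m⟩
end

section
/- If N > σ0 and σ0 is not an integer, then an integer m ∈ {0, 1, …, N} is a pure Nash equilibrium of the parking spot selection game if and only if m = ⌊σ0⌋. -/
/-!
A competing driver gets a public spot with probability `p = min 1 (R / k)`, and competing is at most
as expensive as the private spot exactly when `p` is at least the break-even probability
`(γ - β) / (γ - 1)`. As that probability is below `1`, the truncation by `1` never matters, and the
comparison of `W k` with `β` becomes the comparison of `k` with `σ0`. If `σ0` is not an integer, no
driver is ever indifferent, so drivers join the competition until `⌊σ0⌋` of them (or all) compete.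
-/

/-- Pure Nash equilibria of the symmetric game in which each of `N` players either competes, at
cost `cost k` if `k` players do, or pays the fixed cost `β`. By symmetry a strategy profile is
represented by its number `m` of competing players. The value `cost 0` is irrelevant. -/
def IsPureNash {α : Type*} [LE α] (N : ℕ) (cost : ℕ → α) (β : α) (m : ℕ) : Prop :=
  m ≤ N ∧ (1 ≤ m → cost m ≤ β) ∧ (m < N → β ≤ cost (m + 1))

theorem isPureNash_iff_eq_min {α : Type*} [LE α] {N t : ℕ} {cost : ℕ → α} {β : α}
    (cost_le_iff : ∀ k ≠ 0, cost k ≤ β ↔ k ≤ t) (le_cost_iff : ∀ k ≠ 0, β ≤ cost k ↔ t < k)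
    (m : ℕ) : IsPureNash N cost β m ↔ m = min N t := by
  have no_gain_leaving : (1 ≤ m → cost m ≤ β) ↔ m ≤ t := by
    rcases eq_or_ne m 0 with rfl | hm
    · simp
    · simp [cost_le_iff m hm, Nat.one_le_iff_ne_zero, hm]
  rw [IsPureNash, no_gain_leaving, le_cost_iff _ m.succ_ne_zero]
  omega

section Parking

variable {K : Type*} [Field K] [LinearOrder K]

/-- The expected cost `W(k)` of competing for `R` public spots of fee `1` among `k` drivers, where a
driver who finds no public spot pays `γ`. Only `k ≠ 0` is meaningful. -/
def competitionCost (R γ : K) (k : ℕ) : K :=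
  min 1 (R / k) + (1 - min 1 (R / k)) * γ

/-- The number `σ0` of competing drivers, in general not an integer, at which competing costs as
much as a private spot of cost `β`. -/
def indifferencePoint (R β γ : K) : K :=
  R * (γ - 1) / (γ - β)

variable [IsStrictOrderedRing K] {R β γ : K} {k : ℕ}

theorem competitionCost_le_iff_breakEven_le (hγ : 1 < γ) :
    competitionCost R γ k ≤ β ↔ (γ - β) / (γ - 1) ≤ min 1 (R / k) := by
  rw [competitionCost, div_le_iff₀ (sub_pos.2 hγ)]
  constructor <;> intro h <;> linarith

theorem le_competitionCost_iff_le_breakEven (hγ : 1 < γ) :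
    β ≤ competitionCost R γ k ↔ min 1 (R / k) ≤ (γ - β) / (γ - 1) := by
  rw [competitionCost, le_div_iff₀ (sub_pos.2 hγ)]
  constructor <;> intro h <;> linarith

theorem competitionCost_le_iff_le_indifferencePoint (hβ : 1 ≤ β) (hβγ : β < γ) (hk : k ≠ 0) :
    competitionCost R γ k ≤ β ↔ (k : K) ≤ indifferencePoint R β γ := by
  have hγ : 1 < γ := hβ.trans_lt hβγ
  have hk : (0 : K) < k := by positivity
  have breakEven_le_one : (γ - β) / (γ - 1) ≤ 1 :=
    (div_le_one (sub_pos.2 hγ)).2 (sub_le_sub_left hβ γ)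
  rw [competitionCost_le_iff_breakEven_le hγ, le_min_iff, and_iff_right breakEven_le_one,
    div_le_div_iff₀ (sub_pos.2 hγ) hk, indifferencePoint, le_div_iff₀ (sub_pos.2 hβγ), mul_comm]

theorem le_competitionCost_iff_indifferencePoint_le (hβ : 1 < β) (hβγ : β < γ) (hk : k ≠ 0) :
    β ≤ competitionCost R γ k ↔ indifferencePoint R β γ ≤ k := by
  have hγ : 1 < γ := hβ.trans hβγ
  have hk : (0 : K) < k := by positivity
  have breakEven_lt_one : (γ - β) / (γ - 1) < 1 :=
    (div_lt_one (sub_pos.2 hγ)).2 (sub_lt_sub_left hβ γ)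
  rw [le_competitionCost_iff_le_breakEven hγ, min_le_iff, or_iff_right breakEven_lt_one.not_ge,
    div_le_div_iff₀ hk (sub_pos.2 hγ), indifferencePoint, div_le_iff₀ (sub_pos.2 hβγ),
    mul_comm (k : K)]

theorem stmt_2_general [FloorSemiring K] (N : ℕ) (hβ : 1 < β) (hβγ : β < γ)
    (hnint : ∀ n : ℕ, indifferencePoint R β γ ≠ n) (m : ℕ) :
    IsPureNash N (competitionCost R γ) β m ↔ m = min N ⌊indifferencePoint R β γ⌋₊ := by
  refine isPureNash_iff_eq_min (fun k hk => ?_) (fun k hk => ?_) m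
  · rw [competitionCost_le_iff_le_indifferencePoint hβ.le hβγ hk, Nat.le_floor_iff' hk]
  · rw [le_competitionCost_iff_indifferencePoint_le hβ hβγ hk, Nat.floor_lt' hk,
      (hnint k).le_iff_lt]

end Parking

/-- If N > σ0 and σ0 is not an integer, then m ∈ {0,…,N} is a pure Nash
equilibrium iff m = ⌊σ0⌋. -/
theorem stmt_2 (N R : ℕ) (hN : 1 < N) (hR : 1 ≤ R)
    (β γ δ σ0 : ℝ) (hβ : 1 < β) (hβγ : β < γ)
    (hδ : δ = γ - β) (hσ0 : σ0 = R * (γ - 1) / δ)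
    (W : ℕ → ℝ)
    (hW : ∀ k : ℕ, W k = min 1 ((R : ℝ) / (k : ℝ)) + (1 - min 1 ((R : ℝ) / (k : ℝ))) * γ)
    (isNE : ℕ → Prop)
    (hNE : ∀ m : ℕ, isNE m ↔ m ≤ N ∧ (1 ≤ m → W m ≤ β) ∧ (m < N → β ≤ W (m + 1)))
    (hlt : σ0 < (N : ℝ)) (hnint : ¬ ∃ z : ℤ, (z : ℝ) = σ0) :
    ∀ m : ℕ, m ≤ N → (isNE m ↔ m = ⌊σ0⌋₊) := by
  intro m _
  obtain rfl : W = competitionCost (R : ℝ) γ := funext hW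
  obtain rfl : σ0 = indifferencePoint (R : ℝ) β γ := by rw [hσ0, hδ, indifferencePoint]
  have not_natCast (n : ℕ) : indifferencePoint (R : ℝ) β γ ≠ n := fun h => hnint ⟨n, by simp [h]⟩
  rw [← min_eq_right (Nat.floor_le_of_le hlt.le)]
  exact (hNE m).trans (stmt_2_general N hβ hβγ not_natCast m)
end

section
/- If R < N ≤ σ0, then (γN − R(γ−1)) / (R + β(N − R)) ≤ β / (β − (R/N)(β−1)) < 1/(1 − R/N). In particular, in this regime the pure Price of Anarchy is strictly smaller than 1/(1 − R/N). -/
/-! Over the common denominator `R + β (N - R)` the middle quantity has numerator `β N`, and the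
condition `N ≤ σ0` says exactly that `γ N - R (γ - 1) ≤ β N`. The strict bound depends only on the
ratio `x = R / N`: after cross-multiplying it reads `β (1 - x) < x + β (1 - x)`. -/

section

variable {K : Type*} [Field K]

theorem sub_div_mul_sub_one_eq_div {N : K} (hN : N ≠ 0) (R β : K) :
    β - R / N * (β - 1) = (R + β * (N - R)) / N := by
  field_simp
  ring

variable [LinearOrder K] [IsStrictOrderedRing K]

theorem mul_sub_mul_sub_one_le_mul_iff {β γ : K} (hβγ : β < γ) (N R : K) :
    γ * N - R * (γ - 1) ≤ β * N ↔ N ≤ R * (γ - 1) / (γ - β) := by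
  rw [le_div_iff₀ (sub_pos.2 hβγ), sub_le_comm, ← sub_mul, mul_comm N]

theorem div_sub_mul_sub_one_lt_one_div_one_sub {x β : K} (hx₀ : 0 < x) (hx₁ : x < 1)
    (hpos : 0 < β - x * (β - 1)) : β / (β - x * (β - 1)) < 1 / (1 - x) := by
  rw [div_lt_div_iff₀ hpos (sub_pos.2 hx₁)]
  calc
    β * (1 - x) < x + β * (1 - x) := lt_add_of_pos_left _ hx₀
    _ = 1 * (β - x * (β - 1)) := by ring

theorem div_le_div_sub_div_mul_sub_one_iff {N R β γ : K} (hN : 0 < N)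
    (hpos : 0 < R + β * (N - R)) (hβγ : β < γ) :
    (γ * N - R * (γ - 1)) / (R + β * (N - R)) ≤ β / (β - R / N * (β - 1)) ↔
      N ≤ R * (γ - 1) / (γ - β) := by
  rw [sub_div_mul_sub_one_eq_div hN.ne', div_div_eq_mul_div, div_le_div_iff_of_pos_right hpos,
    mul_sub_mul_sub_one_le_mul_iff hβγ]

theorem stmt_9_general {N R β γ : K} (hR : 0 < R) (hRN : R < N)
    (hpos : 0 < R + β * (N - R)) (hβγ : β < γ) (hle : N ≤ R * (γ - 1) / (γ - β)) :
    (γ * N - R * (γ - 1)) / (R + β * (N - R)) ≤ β / (β - R / N * (β - 1)) ∧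
    β / (β - R / N * (β - 1)) < 1 / (1 - R / N) ∧
    (γ * N - R * (γ - 1)) / (R + β * (N - R)) < 1 / (1 - R / N) := by
  have hN : 0 < N := hR.trans hRN
  have poa_le := (div_le_div_sub_div_mul_sub_one_iff hN hpos hβγ).2 hle
  have bound_lt : β / (β - R / N * (β - 1)) < 1 / (1 - R / N) := by
    refine div_sub_mul_sub_one_lt_one_div_one_sub (div_pos hR hN) ((div_lt_one hN).2 hRN) ?_
    rw [sub_div_mul_sub_one_eq_div hN.ne']
    exact div_pos hpos hN
  exact ⟨poa_le, bound_lt, poa_le.trans_lt bound_lt⟩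

end

/-- If R < N ≤ σ0, then
(γN − R(γ−1))/(R + β(N − R)) ≤ β/(β − (R/N)(β−1)) < 1/(1 − R/N).
In particular the pure Price of Anarchy is strictly smaller than 1/(1 − R/N). -/
theorem stmt_9 (N R : ℕ) (hN : 1 < N) (hR : 1 ≤ R)
    (β γ δ σ0 : ℝ) (hβ : 1 < β) (hβγ : β < γ)
    (hδ : δ = γ - β) (hσ0 : σ0 = R * (γ - 1) / δ)
    (hRN : R < N) (hle : (N : ℝ) ≤ σ0) :
    (γ * N - R * (γ - 1)) / ((R : ℝ) + β * ((N : ℝ) - (R : ℝ)))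
      ≤ β / (β - ((R : ℝ) / (N : ℝ)) * (β - 1)) ∧
    β / (β - ((R : ℝ) / (N : ℝ)) * (β - 1)) < 1 / (1 - (R : ℝ) / (N : ℝ)) ∧
    (γ * N - R * (γ - 1)) / ((R : ℝ) + β * ((N : ℝ) - (R : ℝ)))
      < 1 / (1 - (R : ℝ) / (N : ℝ)) := by
  have hpos : (0 : ℝ) < R + β * (N - R) := by
    have : (0 : ℝ) < N - R := sub_pos.2 (mod_cast hRN)
    positivity
  exact stmt_9_general (mod_cast hR) (mod_cast hRN) hpos hβγ (hδ ▸ hσ0 ▸ hle)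
end

section
/- If N > σ0, then (⌊σ0⌋δ − R(γ−1) + βN) / (R + β(N − R)) ≤ βN/(βN − (β−1)R) < 1/(1 − R/N) = N/(N − R). In particular, in this regime the pure Price of Anarchy is strictly smaller than 1/(1 − R/N) (note N > σ0 > R). -/
/-!
Since `⌊σ0⌋ δ ≤ σ0 δ = R (γ - 1)`, the numerator of the price of anarchy is at most `β N`.
Writing `N / (N - R)` as `β N / (β N - β R)`, the bound `β N / (β N - (β - 1) R)` has the same
numerator and a denominator that is larger by `R`.
-/

section OrderedField

variable {K : Type*} [Field K] [LinearOrder K] [IsStrictOrderedRing K]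

theorem natFloor_div_mul_le [FloorSemiring K] {x d : K} (hx : 0 ≤ x) (hd : 0 < d) :
    (⌊x / d⌋₊ : K) * d ≤ x :=
  (le_div_iff₀ hd).1 (Nat.floor_le (div_nonneg hx hd.le))

theorem lt_mul_sub_one_div_sub {R β γ : K} (hR : 0 < R) (hβ : 1 < β) (hβγ : β < γ) :
    R < R * (γ - 1) / (γ - β) := by
  rw [lt_div_iff₀ (sub_pos.2 hβγ)]
  gcongr

theorem mul_div_mul_sub_sub_one_mul_lt_div_sub {N R β : K} (hR : 0 < R) (hβ : 0 < β)
    (hRN : R < N) : β * N / (β * N - (β - 1) * R) < N / (N - R) := by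
  have hN : 0 < N := hR.trans hRN
  have hNR : 0 < β * (N - R) := mul_pos hβ (sub_pos.2 hRN)
  calc β * N / (β * N - (β - 1) * R)
      = β * N / (β * (N - R) + R) := by congr 1; ring
    _ < β * N / (β * (N - R)) :=
        div_lt_div_of_pos_left (mul_pos hβ hN) hNR (lt_add_of_pos_right _ hR)
    _ = N / (N - R) := mul_div_mul_left _ _ hβ.ne'

theorem natFloor_mul_sub_add_div_le [FloorSemiring K] {N R β γ : K} (hR : 0 ≤ R) (hβ : 0 ≤ β)
    (hγ : 1 ≤ γ) (hβγ : β < γ) (hRN : R ≤ N) :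
    ((⌊R * (γ - 1) / (γ - β)⌋₊ : K) * (γ - β) - R * (γ - 1) + β * N) / (R + β * (N - R))
      ≤ β * N / (β * N - (β - 1) * R) := by
  have hden : β * N - (β - 1) * R = R + β * (N - R) := by ring
  have hden_nonneg : 0 ≤ R + β * (N - R) :=
    add_nonneg hR (mul_nonneg hβ (sub_nonneg.2 hRN))
  have hfloor : (⌊R * (γ - 1) / (γ - β)⌋₊ : K) * (γ - β) ≤ R * (γ - 1) :=
    natFloor_div_mul_le (mul_nonneg hR (sub_nonneg.2 hγ)) (sub_pos.2 hβγ)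
  rw [hden]
  exact div_le_div_of_nonneg_right (by linarith) hden_nonneg

theorem stmt_10_general [FloorSemiring K] {N R β γ δ σ0 : K} (hR : 0 < R) (hβ : 1 < β)
    (hβγ : β < γ) (hδ : δ = γ - β) (hσ0 : σ0 = R * (γ - 1) / δ) (hRN : R < N) :
    R < σ0 ∧
    ((⌊σ0⌋₊ : K) * δ - R * (γ - 1) + β * N) / (R + β * (N - R))
      ≤ β * N / (β * N - (β - 1) * R) ∧
    β * N / (β * N - (β - 1) * R) < 1 / (1 - R / N) ∧
    1 / (1 - R / N) = N / (N - R) ∧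
    ((⌊σ0⌋₊ : K) * δ - R * (γ - 1) + β * N) / (R + β * (N - R)) < 1 / (1 - R / N) := by
  subst hδ hσ0
  have hinv : 1 / (1 - R / N) = N / (N - R) := by
    rw [one_sub_div (hR.trans hRN).ne', one_div_div]
  have hβ_pos : 0 < β := zero_lt_one.trans hβ
  have hle := natFloor_mul_sub_add_div_le hR.le hβ_pos.le (hβ.trans hβγ).le hβγ hRN.le
  have hlt : β * N / (β * N - (β - 1) * R) < 1 / (1 - R / N) :=
    hinv ▸ mul_div_mul_sub_sub_one_mul_lt_div_sub hR hβ_pos hRN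
  exact ⟨lt_mul_sub_one_div_sub hR hβ hβγ, hle, hlt, hinv, hle.trans_lt hlt⟩

end OrderedField

/-- If N > σ0, then
(⌊σ0⌋δ − R(γ−1) + βN)/(R + β(N − R)) ≤ βN/(βN − (β−1)R) < 1/(1 − R/N) = N/(N − R).
In particular the pure Price of Anarchy is strictly smaller than 1/(1 − R/N). -/
theorem stmt_10 (N R : ℕ) (hN : 1 < N) (hR : 1 ≤ R)
    (β γ δ σ0 : ℝ) (hβ : 1 < β) (hβγ : β < γ)
    (hδ : δ = γ - β) (hσ0 : σ0 = R * (γ - 1) / δ)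
    (hlt : σ0 < (N : ℝ)) :
    (R : ℝ) < σ0 ∧
    ((⌊σ0⌋₊ : ℝ) * δ - R * (γ - 1) + β * N) / ((R : ℝ) + β * ((N : ℝ) - (R : ℝ)))
      ≤ β * N / (β * N - (β - 1) * R) ∧
    β * N / (β * N - (β - 1) * R) < 1 / (1 - (R : ℝ) / (N : ℝ)) ∧
    1 / (1 - (R : ℝ) / (N : ℝ)) = (N : ℝ) / ((N : ℝ) - (R : ℝ)) ∧
    ((⌊σ0⌋₊ : ℝ) * δ - R * (γ - 1) + β * N) / ((R : ℝ) + β * ((N : ℝ) - (R : ℝ)))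
      < 1 / (1 - (R : ℝ) / (N : ℝ)) := by
  subst hδ hσ0
  have hR_pos : (0 : ℝ) < R := Nat.cast_pos.2 hR
  exact stmt_10_general hR_pos hβ hβγ rfl rfl ((lt_mul_sub_one_div_sub hR_pos hβ hβγ).trans hlt)
end
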